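/- Let λ_1 < λ_2 < … < λ_s be positive integers that are linearly independent over non-negative integers, and let f:(ℝ,0)→(ℝ^s,0) be the curve-germ f(t) = (t^{λ_1},…,t^{λ_s}). Suppose Φ:(ℝ^s,0)→(ℝ^s,0) and φ:(ℝ,0)→(ℝ,0) are germs of diffeomorphisms such that Φ(f(t)) = f(φ(t)) for all t in a neighbourhood of 0, and set c = φ'(0) (so c≠0). Then the Jacobian matrix of Φ at 0 is upper triangular with prescribed diagonal: for all indices 1≤j<i≤s the partial derivative ∂Φ_i/∂x_j(0) = 0, and for every i, ∂Φ_i/∂x_i(0) = c^{λ_i}. -/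

import Mathlib

open Filter Topology

noncomputable section

/-- A germ of diffeomorphism of `(ℝ,0)`. -/
def IsDiffeoGerm1 (φ : ℝ → ℝ) : Prop :=
  φ 0 = 0 ∧ (∃ U ∈ 𝓝 (0 : ℝ), ContDiffOn ℝ (⊤ : ℕ∞) φ U) ∧ deriv φ 0 ≠ 0

/-- A germ of diffeomorphism of `(ℝ^m,0)`. -/
def IsDiffeoGerm (m : ℕ) (Φ : (Fin m → ℝ) → (Fin m → ℝ)) : Prop :=
  Φ 0 = 0 ∧ (∃ U ∈ 𝓝 (0 : Fin m → ℝ), ContDiffOn ℝ (⊤ : ℕ∞) Φ U) ∧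
    ∃ D : (Fin m → ℝ) ≃L[ℝ] (Fin m → ℝ),
      HasFDerivAt Φ (D : (Fin m → ℝ) →L[ℝ] (Fin m → ℝ)) 0

/-- Positive integers `λ 0, …, λ (s-1)` are linearly independent over non-negative
integers: no `λ j` is a `ℕ`-linear combination of the others. -/
def LinIndepNonneg {s : ℕ} (lam : Fin s → ℕ) : Prop :=
  ∀ j : Fin s, ∀ c : Fin s → ℕ, lam j ≠ ∑ i ∈ Finset.univ.erase j, c i * lam i

open scoped ContDiff

lemma aux_smooth_deriv {ψ : ℝ → ℝ} {x : ℝ} (h : ContDiffAt ℝ ∞ ψ x) : ContDiffAt ℝ ∞ (deriv ψ) x := by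
  have h1 : ContDiffAt ℝ ∞ (fderiv ℝ ψ) x := h.fderiv_right (by exact le_of_eq rfl)
  exact h1.clm_apply contDiffAt_const

lemma aux_ev {E : Type*} [NormedAddCommGroup E] [NormedSpace ℝ E] {ψ : E → ℝ} {x : E}
    (h : ContDiffAt ℝ ∞ ψ x) : ∀ᶠ t in 𝓝 x, DifferentiableAt ℝ ψ t := by
  have h1 : ContDiffAt ℝ 1 ψ x := h.of_le (by exact_mod_cast le_top)
  filter_upwards [h1.eventually (by simp)] with t ht
  exact ht.differentiableAt (by simp)

lemma aux_pow (φ : ℝ → ℝ) (h0 : φ 0 = 0) (hφ : ContDiffAt ℝ ∞ φ 0) (m : ℕ) :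
    ∀ (L : ℕ) (ψ : ℝ → ℝ), ContDiffAt ℝ ∞ ψ 0 → m ≤ L →
      iteratedDeriv m (fun t => ψ t * φ t ^ L) 0 =
        if m = L then (L.factorial : ℝ) * deriv φ 0 ^ L * ψ 0 else 0 := by
  induction m with
  | zero =>
    intro L ψ hψ hL
    rcases L with _ | L
    · simp
    · simp [h0]
  | succ m ih =>
    intro L ψ hψ hL
    obtain ⟨L, rfl⟩ : ∃ K, L = K + 1 := ⟨L - 1, by omega⟩
    have hev : deriv (fun t => ψ t * φ t ^ (L + 1)) =ᶠ[𝓝 0]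
        fun t => (deriv ψ t * φ t + (L + 1) * (ψ t * deriv φ t)) * φ t ^ L := by
      filter_upwards [aux_ev hψ, aux_ev hφ] with t h1 h2
      rw [(h1.hasDerivAt.fun_mul (h2.hasDerivAt.fun_pow (L + 1))).deriv]
      push_cast
      ring
    rw [iteratedDeriv_succ', hev.iteratedDeriv_eq, ih L _ _ (by omega)]
    · by_cases h : m = L
      · simp only [h, if_true, h0, Nat.factorial_succ]
        push_cast
        ring
      · simp [h]
    · exact ((aux_smooth_deriv hψ).mul hφ).add
        (contDiffAt_const.mul (hψ.mul (aux_smooth_deriv hφ)))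

lemma aux_mono (g : ℝ → ℝ) (hg : ContDiffAt ℝ ∞ g 0) (k n : ℕ) :
    iteratedDeriv n (fun t => t ^ k * g t) 0 =
      if k ≤ n then (n.choose k : ℝ) * k.factorial * iteratedDeriv (n - k) g 0 else 0 := by
  have e : (fun t : ℝ => t ^ k * g t) = (fun t : ℝ => t ^ k) * g := rfl
  rw [e, iteratedDeriv_mul (by fun_prop) (hg.of_le (by exact_mod_cast le_top))]
  simp only [iteratedDeriv_fun_pow_zero]
  split_ifs with h
  · rw [Finset.sum_eq_single k]
    · simp
    · intro b _ hb
      simp [hb]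
    · intro hk
      simp at hk
      omega
  · apply Finset.sum_eq_zero
    intro b hb
    have : b ≠ k := by simp at hb; omega
    simp [this]

section
variable {s : ℕ} (lam : Fin s → ℕ)

lemma aux_curve : ContDiff ℝ ∞ (fun t : ℝ => (fun i => t ^ lam i : Fin s → ℝ)) := by
  fun_prop

lemma aux_curve0 (hpos : ∀ i, 0 < lam i) : (fun i => (0:ℝ) ^ lam i : Fin s → ℝ) = 0 := by
  funext i
  simp [(hpos i).ne']

lemma aux_partial {g : (Fin s → ℝ) → ℝ} (hg : ContDiffAt ℝ ∞ g 0) (j : Fin s) :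
    ContDiffAt ℝ ∞ (fun x => fderiv ℝ g x (Pi.single j 1)) 0 := by
  have h1 : ContDiffAt ℝ ∞ (fderiv ℝ g) 0 := hg.fderiv_right (by exact le_of_eq rfl)
  exact h1.clm_apply contDiffAt_const

lemma aux_comp (hpos : ∀ i, 0 < lam i) {g : (Fin s → ℝ) → ℝ} (hg : ContDiffAt ℝ ∞ g 0) :
    ContDiffAt ℝ ∞ (fun t : ℝ => g (fun i => t ^ lam i)) 0 := by
  have h : ContDiffAt ℝ ∞ g (fun i => (0:ℝ) ^ lam i) := by rwa [aux_curve0 lam hpos]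
  exact ContDiffAt.comp (f := fun t : ℝ => (fun i => t ^ lam i : Fin s → ℝ)) 0 h
    (aux_curve lam).contDiffAt

lemma aux_step (hpos : ∀ i, 0 < lam i) {g : (Fin s → ℝ) → ℝ} (hg : ContDiffAt ℝ ∞ g 0) (n : ℕ) :
    iteratedDeriv (n + 1) (fun t : ℝ => g (fun i => t ^ lam i)) 0 =
      ∑ j, (lam j : ℝ) * (if lam j - 1 ≤ n then
        (n.choose (lam j - 1) : ℝ) * (lam j - 1).factorial *
          iteratedDeriv (n - (lam j - 1))
            (fun t : ℝ => fderiv ℝ g (fun i => t ^ lam i) (Pi.single j 1)) 0 else 0) := by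
  have hev : deriv (fun t : ℝ => g (fun i => t ^ lam i)) =ᶠ[𝓝 0]
      fun t => ∑ j, (lam j : ℝ) * (t ^ (lam j - 1) *
        fderiv ℝ g (fun i => t ^ lam i) (Pi.single j 1)) := by
    have hc : Tendsto (fun t : ℝ => (fun i => t ^ lam i : Fin s → ℝ)) (𝓝 0) (𝓝 0) := by
      have := (aux_curve lam).continuous.tendsto 0
      simpa only [aux_curve0 lam hpos] using this
    filter_upwards [hc.eventually (aux_ev hg)] with t ht
    have hf : HasDerivAt (fun t : ℝ => (fun i => t ^ lam i : Fin s → ℝ))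
        (fun i => (lam i : ℝ) * t ^ (lam i - 1)) t :=
      hasDerivAt_pi.2 fun i => hasDerivAt_pow (lam i) t
    have h2 := ht.hasFDerivAt.comp_hasDerivAt t hf
    have h3 : deriv (fun t : ℝ => g (fun i => t ^ lam i)) t = _ := h2.deriv
    rw [h3]
    conv_lhs => rw [pi_eq_sum_univ' (fun i => (lam i : ℝ) * t ^ (lam i - 1))]
    rw [map_sum]
    refine Finset.sum_congr rfl fun j _ => ?_
    rw [map_smul, smul_eq_mul, mul_assoc]
  have hsm : ∀ j : Fin s, ContDiffAt ℝ ∞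
      (fun t : ℝ => fderiv ℝ g (fun i => t ^ lam i) (Pi.single j 1)) 0 := fun j =>
    aux_comp lam hpos (aux_partial hg j)
  rw [iteratedDeriv_succ', hev.iteratedDeriv_eq, iteratedDeriv_fun_sum]
  · refine Finset.sum_congr rfl fun j _ => ?_
    rw [iteratedDeriv_const_mul_field, aux_mono _ (hsm j)]
  · intro j _
    have := hsm j
    have h4 : ContDiffAt ℝ n
      (fun t : ℝ => fderiv ℝ g (fun i => t ^ lam i) (Pi.single j 1)) 0 :=
      this.of_le (by exact_mod_cast le_top)
    exact contDiffAt_const.mul (ContDiffAt.mul (by fun_prop) h4)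

lemma aux_vanish (hpos : ∀ i, 0 < lam i) (m : ℕ) :
    (¬ ∃ c : Fin s → ℕ, m = ∑ i, c i * lam i) →
    ∀ g : (Fin s → ℝ) → ℝ, ContDiffAt ℝ ∞ g 0 →
      iteratedDeriv m (fun t : ℝ => g (fun i => t ^ lam i)) 0 = 0 := by
  induction m using Nat.strong_induction_on with
  | _ m ih =>
    intro hm g hg
    rcases m with _ | m
    · exact absurd ⟨0, by simp⟩ hm
    · rw [aux_step lam hpos hg]
      refine Finset.sum_eq_zero fun j _ => ?_
      split_ifs with h
      · rw [ih _ (by omega) _ _ (aux_partial hg j)]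
        · simp
        · rintro ⟨c, hc⟩
          apply hm
          refine ⟨c + Pi.single j 1, ?_⟩
          have := hpos j
          simp only [Pi.add_apply, add_mul, Finset.sum_add_distrib, ← hc]
          simp [Pi.single_apply]
          omega
      · simp

lemma aux_main (hpos : ∀ i, 0 < lam i) (hind : LinIndepNonneg lam) (i : Fin s)
    (g : (Fin s → ℝ) → ℝ) (hg : ContDiffAt ℝ ∞ g 0) :
    iteratedDeriv (lam i) (fun t : ℝ => g (fun i => t ^ lam i)) 0 =
      (lam i).factorial * fderiv ℝ g 0 (Pi.single i 1) := by
  obtain ⟨n, hn⟩ : ∃ n, lam i = n + 1 := ⟨lam i - 1, by have := hpos i; omega⟩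
  rw [hn, aux_step lam hpos hg, Finset.sum_eq_single i]
  · simp [hn, Nat.factorial_succ, aux_curve0 lam hpos, mul_assoc]
  · intro j _ hji
    split_ifs with h
    · rw [aux_vanish lam hpos _ _ _ (aux_partial hg j)]
      · simp
      · rintro ⟨c, hc⟩
        have hj := hpos j
        have hci : c i = 0 := by
          by_contra hne
          have h1 : c i * lam i ≤ ∑ i, c i * lam i :=
            Finset.single_le_sum (f := fun i => c i * lam i) (fun _ _ => Nat.zero_le _)
              (Finset.mem_univ i)
          have h2 : lam i ≤ c i * lam i := Nat.le_mul_of_pos_left _ (Nat.pos_of_ne_zero hne)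
          omega
        apply hind i (c + Pi.single j 1)
        have h3 : ∑ k, (c + Pi.single j 1 : Fin s → ℕ) k * lam k = lam i := by
          simp only [Pi.add_apply, add_mul, Finset.sum_add_distrib, ← hc]
          simp [Pi.single_apply]
          omega
        rw [← h3, ← Finset.add_sum_erase _ _ (Finset.mem_univ i)]
        simp [hci, Ne.symm hji]
    · simp
  · simp
end

/-- Local symmetries of the monomial curve `f(t) = (t^{λ₁},…,t^{λ_s})` have upper
triangular Jacobian matrix at `0`, with diagonal entries `c^{λ_i}` where `c = φ'(0)`. -/
theorem local_symmetry_jacobian_triangular (s : ℕ) (lam : Fin s → ℕ)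
    (hpos : ∀ i, 0 < lam i) (hmono : StrictMono lam) (hind : LinIndepNonneg lam)
    (Φ : (Fin s → ℝ) → (Fin s → ℝ)) (φ : ℝ → ℝ)
    (hΦ : IsDiffeoGerm s Φ) (hφ : IsDiffeoGerm1 φ)
    (hconj : ∀ᶠ t in 𝓝 (0 : ℝ), Φ (fun i => t ^ lam i) = fun i => (φ t) ^ lam i) :
    deriv φ 0 ≠ 0 ∧
    (∀ i j : Fin s, j < i → fderiv ℝ Φ 0 (Pi.single j 1) i = 0) ∧
    (∀ i : Fin s, fderiv ℝ Φ 0 (Pi.single i 1) i = (deriv φ 0) ^ lam i) := by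
  obtain ⟨hΦ0, ⟨U, hU, hUs⟩, -⟩ := hΦ
  obtain ⟨hφ0, ⟨V, hV, hVs⟩, hd⟩ := hφ
  have hφs : ContDiffAt ℝ ∞ φ 0 := hVs.contDiffAt hV
  have hΦs : ContDiffAt ℝ ∞ Φ 0 := hUs.contDiffAt hU
  have key : ∀ i j : Fin s, j ≤ i → ((lam j).factorial : ℝ) * fderiv ℝ Φ 0 (Pi.single j 1) i =
      if lam j = lam i then ((lam i).factorial : ℝ) * deriv φ 0 ^ lam i else 0 := by
    intro i j hji
    have hg : ContDiffAt ℝ ∞ (fun x => Φ x i) 0 := contDiffAt_pi.1 hΦs i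
    have h1 := aux_main lam hpos hind j _ hg
    have h2 : (fun t : ℝ => Φ (fun k => t ^ lam k) i) =ᶠ[𝓝 0] fun t => 1 * φ t ^ lam i := by
      filter_upwards [hconj] with t ht
      rw [ht, one_mul]
    rw [h2.iteratedDeriv_eq, aux_pow φ hφ0 hφs _ _ _ contDiffAt_const (hmono.monotone hji)] at h1
    have hdiff : DifferentiableAt ℝ Φ 0 := hΦs.differentiableAt (by simp)
    have h3 : fderiv ℝ (fun x => Φ x i) 0 (Pi.single j 1) = fderiv ℝ Φ 0 (Pi.single j 1) i := by
      rw [(hasFDerivAt_pi'.1 hdiff.hasFDerivAt i).fderiv]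
      rfl
    rw [← h3, ← h1]
    simp
  refine ⟨hd, fun i j hji => ?_, fun i => ?_⟩
  · have := key i j hji.le
    rw [if_neg (hmono hji).ne] at this
    exact (mul_eq_zero.1 this).resolve_left (by exact_mod_cast (Nat.factorial_ne_zero _))
  · have := key i i le_rfl
    rw [if_pos rfl] at this
    exact mul_left_cancel₀ (by exact_mod_cast (Nat.factorial_ne_zero _)) this
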